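/- With Q, q, q^c_η as above, for every k ∈ {1,…,n}, ‖∂q^c_η/∂x_k − ∂q/∂x_k‖_{L^∞(ℝⁿ)} ≤ √(⌊n/2+3⌋) · (c/(2η))^{n/2} · e^{−(1/4)(c/(2η))²} · Σ_I |a_I| √(I!). -/

import Mathlib

open scoped RealInnerProductSpace

noncomputable section

/-- The Fourier transform with the convention `F(f)(ξ) = ∫ e^{-i⟨x,ξ⟩} f(x) dx`. -/
def Fn {n : ℕ} (f : EuclideanSpace ℝ (Fin n) → ℂ) (ξ : EuclideanSpace ℝ (Fin n)) : ℂ :=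
  ∫ x : EuclideanSpace ℝ (Fin n), Complex.exp (-Complex.I * (⟪x, ξ⟫ : ℝ)) * f x

/-! The multiplier `χ(η ·)` differs from `1` only outside the ball of radius `R = c / (2η)`, so
differentiating the inversion formula bounds the error by `(2π)⁻ⁿ ∫_{‖ξ‖ > R} |ξ_k| |F(q)(ξ)| dξ`.
Up to a factor of modulus `(2π)^{n/2}`, the transform of `x^I e^{-‖x‖²/2}` is
`He_I(ξ) e^{-‖ξ‖²/2}`, with `He_I` a Hermite polynomial. Apply Cauchy–Schwarz with weight
`e^{-‖ξ‖²/2}`: the `L²` norm of `He_I` produces `√(I!)`, while the tail of `ξ_k²` reduces in polar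
coordinates to a one-dimensional moment, bounded by `(⌊n/2⌋ + 2) Rⁿ e^{-R²/2}` (after
normalisation) through a recursion from dimension `n` to `n + 2`. -/

open MeasureTheory Set Polynomial
open scoped FourierTransform Real

lemma measurableSet_lt_norm {V : Type*} [NormedAddCommGroup V] [MeasurableSpace V]
    [OpensMeasurableSpace V] (r : ℝ) : MeasurableSet {w : V | r < ‖w‖} :=
  measurableSet_lt measurable_const measurable_norm

section FourierMultiplier

variable {V E : Type*} [NormedAddCommGroup V] [InnerProductSpace ℝ V] [FiniteDimensional ℝ V]
  [MeasurableSpace V] [BorelSpace V] [NormedAddCommGroup E]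

lemma integrable_abs_inner_mul_norm {g : V → E} (hg : Integrable g)
    (hg' : Integrable fun w ↦ ‖w‖ * ‖g w‖) (v : V) : Integrable fun w ↦ |⟪w, v⟫| * ‖g w‖ := by
  refine (hg'.const_mul ‖v‖).mono' ?_ (.of_forall fun w ↦ ?_)
  · exact (by fun_prop : Continuous fun w : V ↦ |⟪w, v⟫|).aestronglyMeasurable.mul
      hg.aestronglyMeasurable.norm
  · rw [norm_mul, norm_norm, Real.norm_eq_abs, abs_abs]
    calc |⟪w, v⟫| * ‖g w‖ ≤ ‖w‖ * ‖v‖ * ‖g w‖ := by gcongr; exact abs_real_inner_le_norm w v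
      _ = ‖v‖ * (‖w‖ * ‖g w‖) := by ring

variable [NormedSpace ℂ E]

lemma fourierInv_add_of_integrable {f g : V → E} (hf : Integrable f) (hg : Integrable g) :
    𝓕⁻ (f + g) = 𝓕⁻ f + 𝓕⁻ g := by
  have hadd : 𝓕 (f + g) = 𝓕 f + 𝓕 g :=
    VectorFourier.fourierIntegral_add Real.continuous_fourierChar continuous_inner hf hg
  ext x
  simp only [Real.fourierInv_eq_fourier_neg, hadd, Pi.add_apply]

lemma hasFDerivAt_fourierInv {g : V → E} (hg : Integrable g)
    (hg' : Integrable fun w ↦ ‖w‖ * ‖g w‖) (x : V) :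
    HasFDerivAt (𝓕⁻ g) (-𝓕 (VectorFourier.fourierSMulRight (innerSL ℝ) g) (-x)) x := by
  have h : 𝓕⁻ g = fun x ↦ 𝓕 g (-x) := funext (Real.fourierInv_eq_fourier_neg g)
  rw [h]
  simpa only [ContinuousLinearMap.comp_neg, ContinuousLinearMap.comp_id] using!
    (Real.hasFDerivAt_fourier hg hg' (-x)).comp x (hasFDerivAt_id x).neg

lemma norm_fderiv_fourierInv_apply_le {g : V → E} (hg : Integrable g)
    (hg' : Integrable fun w ↦ ‖w‖ * ‖g w‖) (x v : V) :
    ‖fderiv ℝ (𝓕⁻ g) x v‖ ≤ 2 * π * ∫ w, |⟪w, v⟫| * ‖g w‖ := by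
  have hD : Integrable (VectorFourier.fourierSMulRight (innerSL ℝ) g) := by
    refine (hg'.const_mul (2 * π * ‖innerSL ℝ (E := V)‖)).mono'
      hg.aestronglyMeasurable.fourierSMulRight (.of_forall fun w ↦ ?_)
    exact (VectorFourier.norm_fourierSMulRight_le _ _ _).trans_eq (mul_assoc _ _ _)
  rw [(hasFDerivAt_fourierInv hg hg' x).fderiv, neg_apply, norm_neg,
    Real.fourier_continuousLinearMap_apply hD, ← integral_const_mul]
  refine (VectorFourier.norm_fourierIntegral_le_integral_norm _ _ _ _ _).trans_eq ?_
  congr 1 with w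
  simp only [VectorFourier.fourierSMulRight_apply, norm_smul, norm_neg,
    Complex.norm_mul, Complex.norm_ofNat, Complex.norm_real, Complex.norm_I, Real.norm_eq_abs,
    abs_of_pos Real.pi_pos, mul_one]
  rfl

theorem norm_fderiv_fourierInv_smul_sub_le {g : V → E} (hg : Integrable g)
    (hg' : Integrable fun w ↦ ‖w‖ * ‖g w‖) {m : V → ℂ} (hm : AEStronglyMeasurable m)
    (hm_le : ∀ w, ‖m w - 1‖ ≤ 1) {r : ℝ} (hm_eq : ∀ w, ‖w‖ ≤ r → m w = 1) (x v : V) :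
    ‖fderiv ℝ (𝓕⁻ fun w ↦ m w • g w) x v - fderiv ℝ (𝓕⁻ g) x v‖ ≤
      2 * π * ∫ w in {w | r < ‖w‖}, |⟪w, v⟫| * ‖g w‖ := by
  set e : V → E := fun w ↦ (m w - 1) • g w
  have he_le (w : V) : ‖e w‖ ≤ ‖g w‖ := by
    rw [norm_smul]
    exact mul_le_of_le_one_left (norm_nonneg _) (hm_le w)
  have he_meas : AEStronglyMeasurable e :=
    (hm.sub aestronglyMeasurable_const).smul hg.aestronglyMeasurable
  have he : Integrable e := hg.mono he_meas (.of_forall he_le)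
  have he' : Integrable fun w ↦ ‖w‖ * ‖e w‖ := by
    refine hg'.mono (by fun_prop) (.of_forall fun w ↦ ?_)
    simpa using mul_le_mul_of_nonneg_left (he_le w) (norm_nonneg w)
  have hsplit : (𝓕⁻ fun w ↦ m w • g w) = 𝓕⁻ g + 𝓕⁻ e := by
    rw [← fourierInv_add_of_integrable hg he]
    congr 1 with w
    simp [e, sub_smul]
  rw [hsplit, fderiv_add (hasFDerivAt_fourierInv hg hg' x).differentiableAt
    (hasFDerivAt_fourierInv he he' x).differentiableAt, add_apply, add_sub_cancel_left]
  refine (norm_fderiv_fourierInv_apply_le he he' x v).trans ?_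
  have hmeas : MeasurableSet {w : V | r < ‖w‖} := measurableSet_lt_norm r
  have hint := integrable_abs_inner_mul_norm hg hg' v
  rw [← integral_indicator hmeas]
  refine mul_le_mul_of_nonneg_left (integral_mono_of_nonneg (.of_forall fun w ↦ by positivity)
    (hint.indicator hmeas) (.of_forall fun w ↦ ?_)) (by positivity)
  by_cases hw : r < ‖w‖
  · rw [indicator_of_mem (by exact hw)]
    exact mul_le_mul_of_nonneg_left (he_le w) (abs_nonneg _)
  · simp [e, hm_eq w (not_lt.mp hw), hw]

end FourierMultiplier

section AngularFrequency

variable {n : ℕ}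

lemma Fn_eq_fourier (f : EuclideanSpace ℝ (Fin n) → ℂ) (ξ : EuclideanSpace ℝ (Fin n)) :
    Fn f ξ = 𝓕 f ((2 * π)⁻¹ • ξ) := by
  rw [Fn, Real.fourier_eq']
  congr 1 with x
  have hphase : -2 * π * ⟪x, (2 * π)⁻¹ • ξ⟫ = -⟪x, ξ⟫ := by
    rw [inner_smul_right]
    field_simp
  rw [hphase, smul_eq_mul, Complex.ofReal_neg, neg_mul, neg_mul, mul_comm Complex.I]

lemma integral_mul_cexp_I_inner_eq_fourierInv (g : EuclideanSpace ℝ (Fin n) → ℂ)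
    (x : EuclideanSpace ℝ (Fin n)) :
    (1 / (2 * π) ^ n) * ∫ ξ, g ξ * Complex.exp (Complex.I * (⟪x, ξ⟫ : ℝ)) =
      𝓕⁻ (fun w ↦ g ((2 * π) • w)) x := by
  have hscale := Measure.integral_comp_smul_of_nonneg volume
    (fun ξ : EuclideanSpace ℝ (Fin n) ↦ g ξ * Complex.exp (Complex.I * (⟪x, ξ⟫ : ℝ)))
    (2 * π) (hR := by positivity)
  rw [finrank_euclideanSpace_fin, Complex.real_smul] at hscale
  push_cast at hscale
  rw [one_div, ← hscale, Real.fourierInv_eq']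
  congr 1 with w
  rw [smul_eq_mul, mul_comm, inner_smul_right, real_inner_comm]
  push_cast
  ring_nf

end AngularFrequency

section RealHermite

/-- The probabilists' Hermite polynomial `He_m` with real coefficients, so that it can be
differentiated and integrated against real-valued functions. -/
def realHermite (m : ℕ) : ℝ[X] := (hermite m).map (Int.castRingHom ℝ)

lemma realHermite_zero : realHermite 0 = 1 := by simp [realHermite]

lemma realHermite_succ (m : ℕ) :
    realHermite (m + 1) = X * realHermite m - derivative (realHermite m) := by
  simp [realHermite, hermite_succ, derivative_map]

lemma iterate_derivative_realHermite_self (m : ℕ) :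
    derivative^[m] (realHermite m) = C (m.factorial : ℝ) := by
  have hdeg : (realHermite m).natDegree ≤ m := natDegree_map_le.trans natDegree_hermite.le
  have hconst : (derivative^[m] (realHermite m)).natDegree ≤ 0 :=
    (natDegree_iterate_derivative _ _).trans (by lia)
  rw [eq_C_of_natDegree_le_zero hconst, coeff_iterate_derivative]
  simp [realHermite, Nat.descFactorial_self]

lemma integrable_eval_mul_gaussian (p : ℝ[X]) :
    Integrable fun x : ℝ ↦ p.eval x * Real.exp (-x ^ 2 / 2) := by
  induction p using Polynomial.induction_on' with
  | add p q hp hq => simpa only [eval_add, add_mul] using! hp.add hq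
  | monomial m a =>
    refine ((integrable_rpow_mul_exp_neg_mul_sq (b := 1 / 2) (by norm_num) (s := m)
      (neg_one_lt_zero.trans_le m.cast_nonneg)).const_mul a).congr (.of_forall fun x ↦ ?_)
    simp only [Real.rpow_natCast, eval_monomial, mul_assoc]
    ring_nf

lemma hasDerivAt_eval_mul_gaussian (p : ℝ[X]) (x : ℝ) :
    HasDerivAt (fun x ↦ p.eval x * Real.exp (-x ^ 2 / 2))
      ((derivative p - X * p).eval x * Real.exp (-x ^ 2 / 2)) x := by
  have hexponent : HasDerivAt (fun x : ℝ ↦ -x ^ 2 / 2) (-x) x :=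
    ((hasDerivAt_pow 2 x).neg.div_const 2).congr_deriv (by norm_num; ring)
  exact ((p.hasDerivAt x).mul hexponent.exp).congr_deriv (by simp; ring)

lemma integral_realHermite_mul_gaussian (m : ℕ) (p : ℝ[X]) :
    ∫ x : ℝ, (realHermite m * p).eval x * Real.exp (-x ^ 2 / 2) =
      ∫ x : ℝ, (derivative^[m] p).eval x * Real.exp (-x ^ 2 / 2) := by
  induction m generalizing p with
  | zero => simp [realHermite_zero]
  | succ m ih =>
    have hparts : ∫ x : ℝ, (derivative (realHermite m * p) - X * (realHermite m * p)).eval x *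
        Real.exp (-x ^ 2 / 2) = 0 :=
      integral_eq_zero_of_hasDerivAt_of_integrable (hasDerivAt_eval_mul_gaussian _)
        (integrable_eval_mul_gaussian _) (integrable_eval_mul_gaussian _)
    have hleibniz : realHermite m * derivative p = realHermite (m + 1) * p +
        (derivative (realHermite m * p) - X * (realHermite m * p)) := by
      rw [realHermite_succ, derivative_mul]
      ring
    rw [Function.iterate_succ_apply, ← ih, hleibniz]
    simp_rw [eval_add, add_mul]
    rw [integral_add (integrable_eval_mul_gaussian _) (integrable_eval_mul_gaussian _), hparts,
      add_zero]

lemma integral_exp_neg_sq_div_two : ∫ x : ℝ, Real.exp (-x ^ 2 / 2) = √(2 * π) := by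
  calc ∫ x : ℝ, Real.exp (-x ^ 2 / 2) = ∫ x : ℝ, Real.exp (-(1 / 2) * x ^ 2) := by ring_nf
    _ = √(π / (1 / 2)) := integral_gaussian _
    _ = √(2 * π) := by ring_nf

lemma integral_realHermite_sq_mul_gaussian (m : ℕ) :
    ∫ x : ℝ, (realHermite m).eval x ^ 2 * Real.exp (-x ^ 2 / 2) = m.factorial * √(2 * π) := by
  simp_rw [sq ((realHermite m).eval _), ← eval_mul]
  rw [integral_realHermite_mul_gaussian, iterate_derivative_realHermite_self]
  simp_rw [eval_C]
  rw [integral_const_mul, integral_exp_neg_sq_div_two]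

lemma fourier_exp_neg_sq_div_two (w : ℝ) :
    𝓕 (fun x : ℝ ↦ (Real.exp (-x ^ 2 / 2) : ℂ)) w =
      √(2 * π) * Real.exp (-(2 * π * w) ^ 2 / 2) := by
  have hG := fourier_gaussian_innerProductSpace (V := ℝ) (b := 1 / 2) (by norm_num) w
  have hsqrt : (π / (1 / 2) : ℂ) ^ (1 / 2 : ℂ) = √(2 * π) := by
    rw [Real.sqrt_eq_rpow, Complex.ofReal_cpow (by positivity)]
    push_cast
    ring_nf
  simp only [Module.finrank_self, Nat.cast_one, hsqrt, Real.norm_eq_abs, ← Complex.ofReal_pow,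
    sq_abs] at hG
  convert hG using 4
  all_goals push_cast; ring_nf

lemma integrable_ofReal_pow_mul_gaussian (m : ℕ) :
    Integrable fun x : ℝ ↦ ((x ^ m * Real.exp (-x ^ 2 / 2) : ℝ) : ℂ) := by
  simpa using (integrable_eval_mul_gaussian (X ^ m)).ofReal (𝕜 := ℂ)

lemma hasDerivAt_fourier_pow_mul_gaussian (m : ℕ) (w : ℝ) :
    HasDerivAt (𝓕 fun x : ℝ ↦ ((x ^ m * Real.exp (-x ^ 2 / 2) : ℝ) : ℂ))
      (-2 * π * Complex.I *
        𝓕 (fun x : ℝ ↦ ((x ^ (m + 1) * Real.exp (-x ^ 2 / 2) : ℝ) : ℂ)) w) w := by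
  have hpow_succ (x : ℝ) : x • ((x ^ m * Real.exp (-x ^ 2 / 2) : ℝ) : ℂ) =
      ((x ^ (m + 1) * Real.exp (-x ^ 2 / 2) : ℝ) : ℂ) := by
    rw [Complex.real_smul, ← Complex.ofReal_mul, ← mul_assoc, ← pow_succ']
  have hsmul : (fun x : ℝ ↦
      (-2 * π * Complex.I * x) • ((x ^ m * Real.exp (-x ^ 2 / 2) : ℝ) : ℂ)) =
        (-2 * π * Complex.I) • fun x : ℝ ↦ ((x ^ (m + 1) * Real.exp (-x ^ 2 / 2) : ℝ) : ℂ) := by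
    ext x
    rw [Pi.smul_apply, ← hpow_succ, Complex.real_smul, smul_eq_mul, smul_eq_mul, mul_assoc]
  have hlinear : 𝓕 (fun x : ℝ ↦
      (-2 * π * Complex.I * x) • ((x ^ m * Real.exp (-x ^ 2 / 2) : ℝ) : ℂ)) w =
        -2 * π * Complex.I *
          𝓕 (fun x : ℝ ↦ ((x ^ (m + 1) * Real.exp (-x ^ 2 / 2) : ℝ) : ℂ)) w := by
    rw [hsmul]
    exact congrFun (VectorFourier.fourierIntegral_const_smul _ _ _ _ _) w
  rw [← hlinear]
  exact Real.hasDerivAt_fourier (integrable_ofReal_pow_mul_gaussian m)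
    ((integrable_ofReal_pow_mul_gaussian (m + 1)).congr
      (.of_forall fun x ↦ (hpow_succ x).symm)) w

theorem fourier_pow_mul_gaussian (m : ℕ) (w : ℝ) :
    𝓕 (fun x : ℝ ↦ ((x ^ m * Real.exp (-x ^ 2 / 2) : ℝ) : ℂ)) w =
      √(2 * π) * ((-Complex.I) ^ m *
        ((realHermite m).eval (2 * π * w) * Real.exp (-(2 * π * w) ^ 2 / 2) : ℝ)) := by
  induction m generalizing w with
  | zero => simpa [realHermite_zero] using fourier_exp_neg_sq_div_two w
  | succ m ih =>
    have hhermite : HasDerivAt (fun w : ℝ ↦ √(2 * π) * ((-Complex.I) ^ m *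
        ((realHermite m).eval (2 * π * w) * Real.exp (-(2 * π * w) ^ 2 / 2) : ℝ))) _ w :=
      ((((hasDerivAt_eval_mul_gaussian (realHermite m) (2 * π * w)).comp w
        ((hasDerivAt_id w).const_mul (2 * π))).ofReal_comp).const_mul _).const_mul _
    have hderiv := (funext ih ▸ hasDerivAt_fourier_pow_mul_gaussian m w).unique hhermite
    have hne : -2 * π * Complex.I ≠ 0 := by simp [Real.pi_ne_zero]
    refine mul_left_cancel₀ hne (hderiv.trans ?_)
    have hsucc : (realHermite (m + 1)).eval (2 * π * w) =
        -(derivative (realHermite m) - X * realHermite m).eval (2 * π * w) := by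
      rw [realHermite_succ, ← eval_neg, neg_sub]
    simp only [hsucc, Complex.ofReal_mul, Complex.ofReal_neg, Complex.ofReal_one,
      Complex.ofReal_ofNat]
    ring_nf
    rw [Complex.I_sq]
    ring

end RealHermite

section GaussianTail

/-- The tail moment `∫_R^∞ r^m e^{-r²/2} dr`, an incomplete Gamma function in the variable `r²/2`:
up to a constant, the mass of `‖x‖^{m-n+1} e^{-‖x‖²/2}` outside the ball of radius `R` in `ℝⁿ`. -/
def gaussianTailMoment (R : ℝ) (m : ℕ) : ℝ := ∫ r in Ioi R, r ^ m * Real.exp (-r ^ 2 / 2)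

lemma integrable_pow_mul_gaussian (m : ℕ) :
    Integrable fun r : ℝ ↦ r ^ m * Real.exp (-r ^ 2 / 2) := by
  simpa using integrable_eval_mul_gaussian (X ^ m)

lemma integral_Ioi_derivative_sub_X_mul_gaussian (R : ℝ) (p : ℝ[X]) :
    ∫ r in Ioi R, (derivative p - X * p).eval r * Real.exp (-r ^ 2 / 2) =
      -(p.eval R * Real.exp (-R ^ 2 / 2)) := by
  have hint (p : ℝ[X]) := (integrable_eval_mul_gaussian p).integrableOn (s := Ioi R)
  have hderiv (r : ℝ) (_ : r ∈ Ioi R) := hasDerivAt_eval_mul_gaussian p r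
  rw [integral_Ioi_of_hasDerivAt_of_tendsto' (fun r _ ↦ hasDerivAt_eval_mul_gaussian p r) (hint _)
    (tendsto_zero_of_hasDerivAt_of_integrableOn_Ioi hderiv (hint _) (hint _)), zero_sub]

lemma gaussianTailMoment_one (R : ℝ) : gaussianTailMoment R 1 = Real.exp (-R ^ 2 / 2) := by
  have hparts := integral_Ioi_derivative_sub_X_mul_gaussian R 1
  simp only [derivative_one, mul_one, zero_sub, eval_neg, eval_X, eval_one, one_mul, neg_mul,
    integral_neg, neg_inj] at hparts
  simpa only [gaussianTailMoment, pow_one] using hparts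

lemma gaussianTailMoment_add_two (R : ℝ) (m : ℕ) :
    gaussianTailMoment R (m + 2) =
      R ^ (m + 1) * Real.exp (-R ^ 2 / 2) + (m + 1) * gaussianTailMoment R m := by
  have hparts := integral_Ioi_derivative_sub_X_mul_gaussian R (X ^ (m + 1))
  have hexpand (r : ℝ) : (derivative (X ^ (m + 1) : ℝ[X]) - X * X ^ (m + 1)).eval r *
      Real.exp (-r ^ 2 / 2) = (m + 1) * (r ^ m * Real.exp (-r ^ 2 / 2)) -
        r ^ (m + 2) * Real.exp (-r ^ 2 / 2) := by
    simp
    ring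
  simp_rw [hexpand] at hparts
  rw [integral_sub ((integrable_pow_mul_gaussian m).const_mul _).integrableOn
    (integrable_pow_mul_gaussian _).integrableOn, integral_const_mul, eval_pow, eval_X] at hparts
  unfold gaussianTailMoment
  linarith

lemma gaussianTailMoment_mono {R : ℝ} (hR : 1 ≤ R) : Monotone (gaussianTailMoment R) := by
  refine fun k m hkm ↦ setIntegral_mono_on (integrable_pow_mul_gaussian k).integrableOn
    (integrable_pow_mul_gaussian m).integrableOn measurableSet_Ioi fun r hr ↦ ?_
  have hr1 : 1 ≤ r := hR.trans (le_of_lt hr)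
  gcongr

/-- The volume of the unit ball of `ℝⁿ` divided by `(2π)^{n/2}`, in closed form so that it also
makes sense for `n = 0`. It is the factor by which the mass of a radial function against the
standard Gaussian measure of `ℝⁿ` differs from a one-dimensional moment. -/
def unitBallRatio (n : ℕ) : ℝ := 1 / (√2 ^ n * Real.Gamma (n / 2 + 1))

lemma unitBallRatio_add_two (n : ℕ) : unitBallRatio (n + 2) * (n + 2) = unitBallRatio n := by
  have hGamma : Real.Gamma ((n + 2 : ℕ) / 2 + 1) = (n / 2 + 1) * Real.Gamma (n / 2 + 1) := by
    rw [← Real.Gamma_add_one (by positivity)]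
    push_cast
    ring_nf
  have hsqrt : √2 ^ (n + 2) = 2 * √2 ^ n := by
    rw [pow_add, Real.sq_sqrt zero_le_two, mul_comm]
  have hpos : 0 < Real.Gamma ((n : ℝ) / 2 + 1) := Real.Gamma_pos_of_pos (by positivity)
  rw [unitBallRatio, unitBallRatio, hGamma, hsqrt]
  field_simp

lemma unitBallRatio_pos (n : ℕ) : 0 < unitBallRatio n := by
  have hpos : 0 < Real.Gamma ((n : ℝ) / 2 + 1) := Real.Gamma_pos_of_pos (by positivity)
  unfold unitBallRatio
  positivity

lemma unitBallRatio_le_one (n : ℕ) : unitBallRatio n ≤ 1 := by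
  induction n using Nat.twoStepInduction with
  | zero => simp [unitBallRatio]
  | one =>
    have hGamma : Real.Gamma ((1 : ℕ) / 2 + 1) = 1 / 2 * √π := by
      rw [Nat.cast_one, Real.Gamma_add_one (by norm_num), Real.Gamma_one_half_eq]
    have hdenom : √2 ^ 1 * Real.Gamma ((1 : ℕ) / 2 + 1) = √(π / 2) := by
      rw [hGamma, pow_one, Real.sqrt_div' _ zero_le_two]
      field_simp
      rw [Real.sq_sqrt zero_le_two]
    rw [unitBallRatio, hdenom, div_le_one (by positivity), Real.one_le_sqrt]
    linarith [Real.pi_gt_three]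
  | more n ih _ => nlinarith [unitBallRatio_add_two n, unitBallRatio_pos (n + 2)]

theorem unitBallRatio_mul_gaussianTailMoment_le {R : ℝ} (hR : 1 ≤ R) (n : ℕ) :
    unitBallRatio n * gaussianTailMoment R (n + 1) ≤
      (n / 2 + 2 : ℕ) * R ^ n * Real.exp (-R ^ 2 / 2) := by
  induction n using Nat.twoStepInduction with
  | zero =>
    calc unitBallRatio 0 * gaussianTailMoment R 1 = 1 * Real.exp (-R ^ 2 / 2) := by
          simp [unitBallRatio, gaussianTailMoment_one]
      _ ≤ (0 / 2 + 2 : ℕ) * R ^ 0 * Real.exp (-R ^ 2 / 2) := by gcongr; norm_num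
  | one =>
    have hmoment : gaussianTailMoment R 2 ≤ 2 * (R * Real.exp (-R ^ 2 / 2)) := by
      have hzero := gaussianTailMoment_mono hR zero_le_one
      rw [gaussianTailMoment_one] at hzero
      rw [gaussianTailMoment_add_two]
      simp only [zero_add, pow_one, CharP.cast_eq_zero, one_mul]
      nlinarith [Real.exp_pos (-R ^ 2 / 2)]
    calc unitBallRatio 1 * gaussianTailMoment R (1 + 1)
        ≤ unitBallRatio 1 * (2 * (R * Real.exp (-R ^ 2 / 2))) :=
          mul_le_mul_of_nonneg_left hmoment (unitBallRatio_pos 1).le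
      _ ≤ 1 * (2 * (R * Real.exp (-R ^ 2 / 2))) := by gcongr; exact unitBallRatio_le_one 1
      _ = (1 / 2 + 2 : ℕ) * R ^ 1 * Real.exp (-R ^ 2 / 2) := by norm_num; ring
  | more n ih _ =>
    calc unitBallRatio (n + 2) * gaussianTailMoment R (n + 2 + 1)
        = unitBallRatio (n + 2) * (R ^ (n + 2) * Real.exp (-R ^ 2 / 2)) +
            unitBallRatio n * gaussianTailMoment R (n + 1) := by
          rw [← unitBallRatio_add_two n, show n + 2 + 1 = n + 1 + 2 by lia,
            gaussianTailMoment_add_two]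
          push_cast
          ring
      _ ≤ 1 * (R ^ (n + 2) * Real.exp (-R ^ 2 / 2)) +
            (n / 2 + 2 : ℕ) * R ^ n * Real.exp (-R ^ 2 / 2) := by
          gcongr
          exact unitBallRatio_le_one _
      _ ≤ 1 * (R ^ (n + 2) * Real.exp (-R ^ 2 / 2)) +
            (n / 2 + 2 : ℕ) * R ^ (n + 2) * Real.exp (-R ^ 2 / 2) := by
          gcongr
          lia
      _ = ((n + 2) / 2 + 2 : ℕ) * R ^ (n + 2) * Real.exp (-R ^ 2 / 2) := by
          rw [show (n + 2) / 2 + 2 = n / 2 + 2 + 1 by lia]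
          push_cast
          ring

end GaussianTail

section EuclideanProduct

variable {ι : Type*} [Fintype ι]

lemma integral_prod_euclideanSpace {𝕜 : Type*} [RCLike 𝕜] (f : ι → ℝ → 𝕜) :
    ∫ x : EuclideanSpace ℝ ι, ∏ j, f j (x j) = ∏ j, ∫ t, f j t := by
  rw [← integral_fintype_prod_volume_eq_prod, ← (PiLp.volume_preserving_ofLp ι).integral_comp
    (MeasurableEquiv.toLp 2 _).symm.measurableEmbedding]

lemma fourier_prod_euclideanSpace (f : ι → ℝ → ℂ) (w : EuclideanSpace ℝ ι) :
    𝓕 (fun x : EuclideanSpace ℝ ι ↦ ∏ j, f j (x j)) w = ∏ j, 𝓕 (f j) (w j) := by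
  simp_rw [Real.fourier_eq', smul_eq_mul]
  rw [← integral_prod_euclideanSpace]
  congr 1 with x
  rw [Finset.prod_mul_distrib, ← Complex.exp_sum]
  simp [PiLp.inner_apply, Finset.mul_sum, Finset.sum_mul]

lemma exp_neg_norm_sq_div_two (x : EuclideanSpace ℝ ι) :
    Real.exp (-‖x‖ ^ 2 / 2) = ∏ j, Real.exp (-x j ^ 2 / 2) := by
  rw [← Real.exp_sum, EuclideanSpace.real_norm_sq_eq, ← Finset.sum_div, Finset.sum_neg_distrib]

lemma integrable_mvPolynomial_mul_gaussian (P : MvPolynomial ι ℝ) :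
    Integrable fun x : EuclideanSpace ℝ ι ↦
      MvPolynomial.eval x.ofLp P * Real.exp (-‖x‖ ^ 2 / 2) := by
  induction P using MvPolynomial.induction_on' with
  | add p q hp hq => simpa only [map_add, add_mul] using! hp.add hq
  | monomial I a =>
    have hfactor : Integrable fun x : ι → ℝ ↦ ∏ j, x j ^ I j * Real.exp (-x j ^ 2 / 2) :=
      .fintype_prod fun j ↦ integrable_pow_mul_gaussian (I j)
    refine (((PiLp.volume_preserving_ofLp ι).integrable_comp_of_integrable hfactor).const_mul
      a).congr (.of_forall fun x ↦ ?_)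
    simp only [Function.comp_apply, MvPolynomial.eval_monomial, Finsupp.prod_fintype, pow_zero,
      implies_true, exp_neg_norm_sq_div_two, Finset.prod_mul_distrib, mul_assoc]

lemma integrable_coord_sq_mul_gaussian (k : ι) :
    Integrable fun x : EuclideanSpace ℝ ι ↦ x k ^ 2 * Real.exp (-‖x‖ ^ 2 / 2) := by
  have hX := integrable_mvPolynomial_mul_gaussian (MvPolynomial.X k ^ 2 : MvPolynomial ι ℝ)
  simpa only [map_pow, MvPolynomial.eval_X] using hX

lemma norm_le_one_add_sum_sq (x : EuclideanSpace ℝ ι) : ‖x‖ ≤ 1 + ∑ j, x j ^ 2 := by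
  rw [← EuclideanSpace.real_norm_sq_eq]
  nlinarith [sq_nonneg (‖x‖ - 1), sq_nonneg ‖x‖]

lemma integrable_norm_mul_mvPolynomial_mul_gaussian (P : MvPolynomial ι ℝ) :
    Integrable fun x : EuclideanSpace ℝ ι ↦
      ‖x‖ * (MvPolynomial.eval x.ofLp P * Real.exp (-‖x‖ ^ 2 / 2)) := by
  refine (integrable_mvPolynomial_mul_gaussian ((1 + ∑ j, .X j ^ 2) * P)).mono
    ((continuous_norm.aestronglyMeasurable).mul
      (integrable_mvPolynomial_mul_gaussian P).aestronglyMeasurable) (.of_forall fun x ↦ ?_)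
  have hnonneg : 0 ≤ ∑ j, x j ^ 2 := Finset.sum_nonneg fun j _ ↦ sq_nonneg _
  simp only [map_mul, map_add, map_one, map_sum, map_pow, MvPolynomial.eval_X, norm_mul, norm_norm,
    mul_assoc]
  gcongr
  exact (norm_le_one_add_sum_sq x).trans (le_abs_self _)

end EuclideanProduct

section HermiteFunction

variable {ι : Type*} [Fintype ι]

/-- The multivariate Hermite polynomial `He_I(x) = ∏ⱼ He_{I j}(xⱼ)`. -/
def mvHermite (I : ι → ℕ) : MvPolynomial ι ℝ :=
  ∏ j, Polynomial.aeval (MvPolynomial.X j) (realHermite (I j))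

lemma eval_mvHermite (I : ι → ℕ) (x : ι → ℝ) :
    MvPolynomial.eval x (mvHermite I) = ∏ j, (realHermite (I j)).eval (x j) := by
  have hcoord (j : ι) (p : ℝ[X]) :
      MvPolynomial.eval x (Polynomial.aeval (MvPolynomial.X j) p) = p.eval (x j) := by
    rw [← MvPolynomial.coe_aeval_eq_eval, RingHom.coe_coe, ← Polynomial.aeval_algHom_apply,
      MvPolynomial.aeval_X, Polynomial.coe_aeval_eq_eval]
  simp only [mvHermite, map_prod, hcoord]

/-- The Hermite function `He_I(x) e^{-‖x‖²/2}`, which up to a constant is the Fourier transform of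
`x^I e^{-‖x‖²/2}`; it is not normalised in `L²`. -/
def hermiteFun (I : ι → ℕ) (x : EuclideanSpace ℝ ι) : ℝ :=
  MvPolynomial.eval x.ofLp (mvHermite I) * Real.exp (-‖x‖ ^ 2 / 2)

lemma hermiteFun_eq_prod (I : ι → ℕ) (x : EuclideanSpace ℝ ι) :
    hermiteFun I x = ∏ j, (realHermite (I j)).eval (x j) * Real.exp (-x j ^ 2 / 2) := by
  rw [hermiteFun, eval_mvHermite, exp_neg_norm_sq_div_two, Finset.prod_mul_distrib]

lemma integrable_hermiteFun (I : ι → ℕ) : Integrable (hermiteFun I) :=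
  integrable_mvPolynomial_mul_gaussian _

lemma integrable_norm_mul_hermiteFun (I : ι → ℕ) : Integrable fun x ↦ ‖x‖ * hermiteFun I x :=
  integrable_norm_mul_mvPolynomial_mul_gaussian _

theorem fourier_monomial_mul_gaussian (I : ι → ℕ) (w : EuclideanSpace ℝ ι) :
    𝓕 (fun x : EuclideanSpace ℝ ι ↦ (((∏ j, x j ^ I j) * Real.exp (-‖x‖ ^ 2 / 2) : ℝ) : ℂ)) w =
      √(2 * π) ^ Fintype.card ι *
        ((∏ j, (-Complex.I) ^ I j) * hermiteFun I ((2 * π) • w)) := by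
  simp_rw [hermiteFun_eq_prod, exp_neg_norm_sq_div_two, ← Finset.prod_mul_distrib,
    Complex.ofReal_prod]
  rw [fourier_prod_euclideanSpace fun j t ↦ ((t ^ I j * Real.exp (-t ^ 2 / 2) : ℝ) : ℂ)]
  simp_rw [fourier_pow_mul_gaussian, Finset.prod_mul_distrib, Finset.prod_const, Finset.card_univ,
    PiLp.smul_apply, smul_eq_mul]

theorem integral_mvHermite_sq_mul_gaussian (I : ι → ℕ) :
    ∫ x : EuclideanSpace ℝ ι, MvPolynomial.eval x.ofLp (mvHermite I) ^ 2 *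
      Real.exp (-‖x‖ ^ 2 / 2) = √(2 * π) ^ Fintype.card ι * ∏ j, ((I j).factorial : ℝ) := by
  simp_rw [eval_mvHermite, exp_neg_norm_sq_div_two, ← Finset.prod_pow, ← Finset.prod_mul_distrib]
  rw [integral_prod_euclideanSpace fun j t ↦ (realHermite (I j)).eval t ^ 2 *
    Real.exp (-t ^ 2 / 2)]
  simp_rw [integral_realHermite_sq_mul_gaussian, Finset.prod_mul_distrib, Finset.prod_const,
    Finset.card_univ, mul_comm]

end HermiteFunction

section RadialTail

variable {ι : Type*} [Fintype ι]

/-- By symmetry under permutations of the coordinates, `x k ^ 2` may be replaced by its average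
`‖x‖ ^ 2 / n`; the rest is integration in polar coordinates. -/
lemma integral_norm_mul_coord_sq (f : ℝ → ℝ) (k : ι)
    (hf : Integrable fun x : EuclideanSpace ℝ ι ↦ f ‖x‖ * x k ^ 2) :
    ∫ x : EuclideanSpace ℝ ι, f ‖x‖ * x k ^ 2 =
      volume.real (Metric.ball (0 : EuclideanSpace ℝ ι) 1) *
        ∫ r in Ioi (0 : ℝ), r ^ (Fintype.card ι + 1) * f r := by
  classical
  have : Nonempty ι := ⟨k⟩
  let e (l : ι) : EuclideanSpace ℝ ι ≃ₗᵢ[ℝ] EuclideanSpace ℝ ι :=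
    .piLpCongrLeft 2 ℝ ℝ (Equiv.swap k l)
  have hswap (l : ι) : (fun x : EuclideanSpace ℝ ι ↦ f ‖x‖ * x l ^ 2) =
      (fun x ↦ f ‖x‖ * x k ^ 2) ∘ e l := by
    ext x
    simp [e, LinearIsometryEquiv.piLpCongrLeft_apply, Equiv.piCongrLeft']
  have hint (l : ι) : Integrable fun x : EuclideanSpace ℝ ι ↦ f ‖x‖ * x l ^ 2 :=
    hswap l ▸ (e l).measurePreserving.integrable_comp_of_integrable hf
  have heq (l : ι) : ∫ x : EuclideanSpace ℝ ι, f ‖x‖ * x l ^ 2 =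
      ∫ x : EuclideanSpace ℝ ι, f ‖x‖ * x k ^ 2 := by
    rw [hswap l]
    exact (e l).measurePreserving.integral_comp (e l).toHomeomorph.measurableEmbedding
      fun x ↦ f ‖x‖ * x k ^ 2
  have hsum : Fintype.card ι * ∫ x : EuclideanSpace ℝ ι, f ‖x‖ * x k ^ 2 =
      ∫ x : EuclideanSpace ℝ ι, ‖x‖ ^ 2 * f ‖x‖ := by
    simp_rw [EuclideanSpace.real_norm_sq_eq, mul_comm _ (f _), Finset.mul_sum]
    rw [integral_finsetSum Finset.univ fun l _ ↦ hint l]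
    simp [heq]
  have hcard : (Fintype.card ι - 1) + 2 = Fintype.card ι + 1 := by
    have := Fintype.card_pos (α := ι)
    lia
  rw [integral_fun_norm_addHaar (volume : Measure (EuclideanSpace ℝ ι)) fun r ↦ r ^ 2 * f r,
    finrank_euclideanSpace] at hsum
  simp_rw [nsmul_eq_mul, smul_eq_mul, ← mul_assoc _ _ (f _), ← pow_add, hcard] at hsum
  exact mul_left_cancel₀ (by positivity : (Fintype.card ι : ℝ) ≠ 0) hsum

lemma volume_real_unitBall [Nonempty ι] :
    volume.real (Metric.ball (0 : EuclideanSpace ℝ ι) 1) =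
      √(2 * π) ^ Fintype.card ι * unitBallRatio (Fintype.card ι) := by
  have hGamma : 0 < Real.Gamma (Fintype.card ι / 2 + 1) := Real.Gamma_pos_of_pos (by positivity)
  rw [measureReal_def, EuclideanSpace.volume_ball, ENNReal.ofReal_one, one_pow, one_mul,
    ENNReal.toReal_ofReal (by positivity), unitBallRatio, Real.sqrt_mul zero_le_two, mul_pow]
  field_simp

theorem setIntegral_coord_sq_mul_gaussian_le {R : ℝ} (hR : 1 ≤ R) (k : ι) :
    ∫ x in {x : EuclideanSpace ℝ ι | R < ‖x‖}, x k ^ 2 * Real.exp (-‖x‖ ^ 2 / 2) ≤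
      √(2 * π) ^ Fintype.card ι *
        ((Fintype.card ι / 2 + 2 : ℕ) * R ^ Fintype.card ι * Real.exp (-R ^ 2 / 2)) := by
  have : Nonempty ι := ⟨k⟩
  set f : ℝ → ℝ := (Ioi R).indicator fun r ↦ Real.exp (-r ^ 2 / 2)
  have hf : {x : EuclideanSpace ℝ ι | R < ‖x‖}.indicator
      (fun x ↦ x k ^ 2 * Real.exp (-‖x‖ ^ 2 / 2)) = fun x ↦ f ‖x‖ * x k ^ 2 := by
    ext x
    simp [f, indicator, mul_comm]
  have hint : Integrable fun x : EuclideanSpace ℝ ι ↦ f ‖x‖ * x k ^ 2 := by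
    rw [← hf]
    exact (integrable_coord_sq_mul_gaussian k).indicator (measurableSet_lt_norm R)
  have hmoment : ∫ r in Ioi (0 : ℝ), r ^ (Fintype.card ι + 1) * f r =
      gaussianTailMoment R (Fintype.card ι + 1) := by
    simp_rw [f, ← indicator_mul_right (Ioi R) (fun r ↦ r ^ (Fintype.card ι + 1))]
    rw [setIntegral_indicator measurableSet_Ioi, Ioi_inter_Ioi, sup_of_le_right (by linarith)]
    rfl
  rw [← integral_indicator (measurableSet_lt_norm R), hf, integral_norm_mul_coord_sq f k hint,
    hmoment, volume_real_unitBall, mul_assoc]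
  exact mul_le_mul_of_nonneg_left (unitBallRatio_mul_gaussianTailMoment_le hR _) (by positivity)

end RadialTail

section HermiteTail

lemma integral_abs_mul_abs_mul_le_sqrt_mul_sqrt {α : Type*} [MeasurableSpace α] {μ : Measure α}
    {f g w : α → ℝ} (hf : AEStronglyMeasurable f μ) (hg : AEStronglyMeasurable g μ)
    (hw : AEStronglyMeasurable w μ) (hw_nonneg : 0 ≤ w)
    (hf2 : Integrable (fun x ↦ f x ^ 2 * w x) μ) (hg2 : Integrable (fun x ↦ g x ^ 2 * w x) μ) :
    ∫ x, |f x| * |g x| * w x ∂μ ≤ √(∫ x, f x ^ 2 * w x ∂μ) * √(∫ x, g x ^ 2 * w x ∂μ) := by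
  have hsq (u : α → ℝ) (x : α) : (|u x| * √(w x)) ^ 2 = u x ^ 2 * w x := by
    rw [mul_pow, sq_abs, Real.sq_sqrt (hw_nonneg x)]
  have hmul (x : α) : |f x| * |g x| * w x = |f x| * √(w x) * (|g x| * √(w x)) := by
    rw [mul_mul_mul_comm, Real.mul_self_sqrt (hw_nonneg x)]
  have hmemLp {u : α → ℝ} (hu : AEStronglyMeasurable u μ)
      (hu2 : Integrable (fun x ↦ u x ^ 2 * w x) μ) :
      MemLp (fun x ↦ |u x| * √(w x)) (ENNReal.ofReal 2) μ := by
    have hmeas : AEStronglyMeasurable (fun x ↦ |u x| * √(w x)) μ :=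
      hu.norm.mul (Real.continuous_sqrt.comp_aestronglyMeasurable hw)
    rw [ENNReal.ofReal_ofNat, memLp_two_iff_integrable_sq hmeas]
    simpa only [hsq] using hu2
  have holder := integral_mul_le_Lp_mul_Lq_of_nonneg Real.HolderConjugate.two_two
    (.of_forall fun x ↦ by positivity) (.of_forall fun x ↦ by positivity)
    (hmemLp hf hf2) (hmemLp hg hg2)
  simpa only [← hmul, Real.rpow_two, hsq, ← Real.sqrt_eq_rpow] using holder

variable {ι : Type*} [Fintype ι]

lemma continuous_eval_mvHermite (I : ι → ℕ) :
    Continuous fun x : EuclideanSpace ℝ ι ↦ MvPolynomial.eval x.ofLp (mvHermite I) :=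
  (mvHermite I).continuous_eval.comp (PiLp.continuous_ofLp 2 _)

lemma integrable_mvHermite_sq_mul_gaussian (I : ι → ℕ) :
    Integrable fun x : EuclideanSpace ℝ ι ↦
      MvPolynomial.eval x.ofLp (mvHermite I) ^ 2 * Real.exp (-‖x‖ ^ 2 / 2) := by
  have hsq := integrable_mvPolynomial_mul_gaussian (mvHermite I ^ 2)
  simpa only [map_pow] using hsq

lemma sqrt_pow_mul_exp_neg_sq_div_two {R : ℝ} (hR : 0 ≤ R) (n : ℕ) :
    √(R ^ n * Real.exp (-R ^ 2 / 2)) = R ^ ((n : ℝ) / 2) * Real.exp (-(1 / 4) * R ^ 2) := by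
  rw [Real.sqrt_mul (by positivity), ← Real.exp_half, Real.sqrt_eq_rpow, ← Real.rpow_natCast,
    ← Real.rpow_mul hR]
  ring_nf

theorem setIntegral_abs_coord_mul_abs_hermiteFun_le {R : ℝ} (hR : 1 ≤ R) (I : ι → ℕ) (k : ι) :
    ∫ x in {x : EuclideanSpace ℝ ι | R < ‖x‖}, |x k| * |hermiteFun I x| ≤
      √(2 * π) ^ Fintype.card ι * (√(Fintype.card ι / 2 + 2 : ℕ) * R ^ (Fintype.card ι / 2 : ℝ) *
        Real.exp (-(1 / 4) * R ^ 2) * √(∏ j, ((I j).factorial : ℝ))) := by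
  have hcs := integral_abs_mul_abs_mul_le_sqrt_mul_sqrt
    (μ := volume.restrict {x : EuclideanSpace ℝ ι | R < ‖x‖}) (f := fun x ↦ x k)
    (by fun_prop) (continuous_eval_mvHermite I).aestronglyMeasurable (by fun_prop)
    (fun x ↦ (Real.exp_pos _).le) (integrable_coord_sq_mul_gaussian k).integrableOn
    (integrable_mvHermite_sq_mul_gaussian I).integrableOn
  have hhermite : ∫ x in {x : EuclideanSpace ℝ ι | R < ‖x‖},
      MvPolynomial.eval x.ofLp (mvHermite I) ^ 2 * Real.exp (-‖x‖ ^ 2 / 2) ≤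
        √(2 * π) ^ Fintype.card ι * ∏ j, ((I j).factorial : ℝ) := by
    rw [← integral_mvHermite_sq_mul_gaussian]
    exact setIntegral_le_integral (integrable_mvHermite_sq_mul_gaussian I)
      (.of_forall fun x ↦ by positivity)
  simp only [hermiteFun, abs_mul, Real.abs_exp, ← mul_assoc |_|]
  refine (hcs.trans (mul_le_mul (Real.sqrt_le_sqrt (setIntegral_coord_sq_mul_gaussian_le hR k))
    (Real.sqrt_le_sqrt hhermite) (Real.sqrt_nonneg _) (Real.sqrt_nonneg _))).trans_eq ?_
  have hA : 0 ≤ √(2 * π) ^ Fintype.card ι := by positivity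
  rw [Real.sqrt_mul hA, Real.sqrt_mul hA, mul_mul_mul_comm, Real.mul_self_sqrt hA,
    mul_assoc (Nat.cast _), Real.sqrt_mul (Nat.cast_nonneg _),
    sqrt_pow_mul_exp_neg_sq_div_two (by positivity), ← mul_assoc √(Nat.cast _)]

end HermiteTail

section PolyGaussian

lemma fourier_finsetSum_const_mul {V κ : Type*} [NormedAddCommGroup V] [InnerProductSpace ℝ V]
    [FiniteDimensional ℝ V] [MeasurableSpace V] [BorelSpace V] (S : Finset κ) (c : κ → ℂ)
    {f : κ → V → ℂ} (hf : ∀ i ∈ S, Integrable (f i)) (w : V) :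
    𝓕 (fun x ↦ ∑ i ∈ S, c i * f i x) w = ∑ i ∈ S, c i * 𝓕 (f i) w := by
  simp only [Real.fourier_eq, Finset.smul_sum, mul_smul_comm, ← integral_const_mul]
  exact integral_finsetSum S fun i hi ↦
    (Real.fourierIntegral_convergent_iff w).mpr ((hf i hi).const_mul (c i))

variable {ι : Type*} [Fintype ι]

/-- The function `Q(x) e^{-‖x‖²/2}`, where `Q(x) = ∑_{I ∈ S} a_I x^I`. -/
def polyGaussian (S : Finset (ι → ℕ)) (a : (ι → ℕ) → ℝ) (x : EuclideanSpace ℝ ι) : ℝ :=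
  (∑ I ∈ S, a I * ∏ j, x j ^ I j) * Real.exp (-‖x‖ ^ 2 / 2)

lemma differentiable_polyGaussian (S : Finset (ι → ℕ)) (a : (ι → ℕ) → ℝ) :
    Differentiable ℝ (polyGaussian S a) := by
  have hnorm : Differentiable ℝ fun x : EuclideanSpace ℝ ι ↦ ‖x‖ ^ 2 :=
    (contDiff_norm_sq ℝ (n := 1)).differentiable one_ne_zero
  unfold polyGaussian
  fun_prop

lemma integrable_monomial_mul_gaussian (I : ι → ℕ) :
    Integrable fun x : EuclideanSpace ℝ ι ↦ (∏ j, x j ^ I j) * Real.exp (-‖x‖ ^ 2 / 2) := by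
  have hX := integrable_mvPolynomial_mul_gaussian (∏ j, MvPolynomial.X j ^ I j)
  simpa only [map_prod, map_pow, MvPolynomial.eval_X] using hX

lemma ofReal_polyGaussian (S : Finset (ι → ℕ)) (a : (ι → ℕ) → ℝ) (x : EuclideanSpace ℝ ι) :
    (polyGaussian S a x : ℂ) =
      ∑ I ∈ S, (a I : ℂ) * (((∏ j, x j ^ I j) * Real.exp (-‖x‖ ^ 2 / 2) : ℝ) : ℂ) := by
  simp only [polyGaussian, Finset.sum_mul, Complex.ofReal_sum, mul_assoc, Complex.ofReal_mul]

lemma integrable_ofReal_polyGaussian (S : Finset (ι → ℕ)) (a : (ι → ℕ) → ℝ) :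
    Integrable fun x ↦ (polyGaussian S a x : ℂ) := by
  simp_rw [ofReal_polyGaussian]
  exact integrable_finsetSum S fun I _ ↦ (integrable_monomial_mul_gaussian I).ofReal.const_mul _

lemma fourier_polyGaussian (S : Finset (ι → ℕ)) (a : (ι → ℕ) → ℝ) (w : EuclideanSpace ℝ ι) :
    𝓕 (fun x ↦ (polyGaussian S a x : ℂ)) w = ∑ I ∈ S, (a I : ℂ) *
      (√(2 * π) ^ Fintype.card ι *
        ((∏ j, (-Complex.I) ^ I j) * hermiteFun I ((2 * π) • w))) := by
  simp_rw [ofReal_polyGaussian, ← fourier_monomial_mul_gaussian]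
  exact fourier_finsetSum_const_mul S _
    (fun I _ ↦ (integrable_monomial_mul_gaussian I).ofReal) w

lemma norm_fourier_polyGaussian_le (S : Finset (ι → ℕ)) (a : (ι → ℕ) → ℝ)
    (w : EuclideanSpace ℝ ι) :
    ‖𝓕 (fun x ↦ (polyGaussian S a x : ℂ)) w‖ ≤
      √(2 * π) ^ Fintype.card ι * ∑ I ∈ S, |a I| * |hermiteFun I ((2 * π) • w)| := by
  rw [fourier_polyGaussian, Finset.mul_sum]
  refine (norm_sum_le _ _).trans_eq (Finset.sum_congr rfl fun I _ ↦ ?_)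
  simp only [norm_mul, norm_prod, norm_pow, norm_neg, Complex.norm_I, one_pow,
    Finset.prod_const_one, Complex.norm_real, Real.norm_eq_abs, abs_of_nonneg (Real.sqrt_nonneg _)]
  ring

lemma integrable_fourier_polyGaussian (S : Finset (ι → ℕ)) (a : (ι → ℕ) → ℝ) :
    Integrable (𝓕 fun x ↦ (polyGaussian S a x : ℂ)) := by
  rw [funext (fourier_polyGaussian S a)]
  exact integrable_finsetSum S fun I _ ↦
    ((((integrable_hermiteFun I).comp_smul (by positivity)).ofReal.const_mul
      _).const_mul _).const_mul _

lemma integrable_norm_mul_hermiteFun_smul (I : ι → ℕ) {ρ : ℝ} (hρ : ρ ≠ 0) :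
    Integrable fun w : EuclideanSpace ℝ ι ↦ ‖w‖ * |hermiteFun I (ρ • w)| := by
  refine (((integrable_norm_mul_hermiteFun I).comp_smul hρ).abs.const_mul |ρ|⁻¹).congr
    (.of_forall fun w ↦ ?_)
  simp only [abs_mul, abs_abs, abs_norm, norm_smul, Real.norm_eq_abs]
  field_simp

lemma integrable_norm_mul_fourier_polyGaussian (S : Finset (ι → ℕ)) (a : (ι → ℕ) → ℝ) :
    Integrable fun w ↦ ‖w‖ * ‖𝓕 (fun x ↦ (polyGaussian S a x : ℂ)) w‖ := by
  have hbound : Integrable fun w : EuclideanSpace ℝ ι ↦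
      √(2 * π) ^ Fintype.card ι * ∑ I ∈ S, |a I| * (‖w‖ * |hermiteFun I ((2 * π) • w)|) :=
    (integrable_finsetSum S fun I _ ↦
      (integrable_norm_mul_hermiteFun_smul I (by positivity)).const_mul _).const_mul _
  refine hbound.mono' (continuous_norm.aestronglyMeasurable.mul
    (integrable_fourier_polyGaussian S a).aestronglyMeasurable.norm) (.of_forall fun w ↦ ?_)
  rw [norm_mul, norm_norm, norm_norm]
  refine (mul_le_mul_of_nonneg_left (norm_fourier_polyGaussian_le S a w)
    (norm_nonneg w)).trans_eq ?_
  simp only [Finset.mul_sum]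
  exact Finset.sum_congr rfl fun I _ ↦ by ring

lemma setIntegral_abs_coord_mul_comp_smul (f : EuclideanSpace ℝ ι → ℝ) {ρ : ℝ} (hρ : 0 < ρ)
    (R : ℝ) (k : ι) :
    ρ * ∫ w in {w : EuclideanSpace ℝ ι | R / ρ < ‖w‖}, |w k| * f (ρ • w) =
      (ρ ^ Fintype.card ι)⁻¹ * ∫ x in {x : EuclideanSpace ℝ ι | R < ‖x‖}, |x k| * f x := by
  have hscale := Measure.integral_comp_smul_of_nonneg volume
    ({x : EuclideanSpace ℝ ι | R < ‖x‖}.indicator fun x ↦ |x k| * f x) ρ (hR := hρ.le)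
  rw [finrank_euclideanSpace, integral_indicator (measurableSet_lt_norm R), smul_eq_mul] at hscale
  rw [← hscale, ← integral_indicator (measurableSet_lt_norm _), ← integral_const_mul]
  congr 1 with w
  simp [indicator, norm_smul, abs_of_pos hρ, abs_mul, div_lt_iff₀' hρ, mul_assoc]

end PolyGaussian

section Multiplier

variable {ι : Type*} [Fintype ι]

lemma fourierInv_fourier_polyGaussian (S : Finset (ι → ℕ)) (a : (ι → ℕ) → ℝ) :
    𝓕⁻ (𝓕 fun x ↦ (polyGaussian S a x : ℂ)) = fun x ↦ (polyGaussian S a x : ℂ) :=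
  (Complex.continuous_ofReal.comp (differentiable_polyGaussian S a).continuous)
    |>.fourierInv_fourier_eq (integrable_ofReal_polyGaussian S a)
      (integrable_fourier_polyGaussian S a)

lemma fderiv_ofReal_comp {V : Type*} [NormedAddCommGroup V] [NormedSpace ℝ V] {f : V → ℝ} {x : V}
    (hf : DifferentiableAt ℝ f x) (v : V) :
    fderiv ℝ (fun y ↦ (f y : ℂ)) x v = (fderiv ℝ f x v : ℝ) :=
  DFunLike.congr_fun (Complex.ofRealCLM.hasFDerivAt.comp x hf.hasFDerivAt).fderiv v

lemma integrable_abs_coord_mul_abs_hermiteFun_smul (I : ι → ℕ) (k : ι) {ρ : ℝ} (hρ : ρ ≠ 0) :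
    Integrable fun w : EuclideanSpace ℝ ι ↦ |w k| * |hermiteFun I (ρ • w)| := by
  classical
  have hinner := integrable_abs_inner_mul_norm ((integrable_hermiteFun I).comp_smul hρ)
    (integrable_norm_mul_hermiteFun_smul I hρ) (EuclideanSpace.single k 1)
  simpa only [EuclideanSpace.inner_single_right, one_mul, conj_trivial] using! hinner

lemma setIntegral_abs_coord_mul_abs_hermiteFun_smul_le {R : ℝ} (hR : 1 ≤ R) (I : ι → ℕ) (k : ι) :
    √(2 * π) ^ Fintype.card ι * (2 * π * ∫ w in {w : EuclideanSpace ℝ ι | R / (2 * π) < ‖w‖},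
        |w k| * |hermiteFun I ((2 * π) • w)|) ≤
      √(Fintype.card ι / 2 + 2 : ℕ) * R ^ (Fintype.card ι / 2 : ℝ) *
        Real.exp (-(1 / 4) * R ^ 2) * √(∏ j, ((I j).factorial : ℝ)) := by
  have hpow : (2 * π) ^ Fintype.card ι =
      √(2 * π) ^ Fintype.card ι * √(2 * π) ^ Fintype.card ι := by
    rw [← mul_pow, Real.mul_self_sqrt (by positivity)]
  rw [setIntegral_abs_coord_mul_comp_smul (fun x ↦ |hermiteFun I x|) Real.two_pi_pos, hpow,
    mul_inv_rev, ← mul_assoc, mul_inv_cancel_left₀ (by positivity),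
    inv_mul_le_iff₀ (by positivity)]
  exact setIntegral_abs_coord_mul_abs_hermiteFun_le hR I k

theorem setIntegral_abs_coord_mul_norm_fourier_polyGaussian_le {R : ℝ} (hR : 1 ≤ R)
    (S : Finset (ι → ℕ)) (a : (ι → ℕ) → ℝ) (k : ι) :
    2 * π * ∫ w in {w : EuclideanSpace ℝ ι | R / (2 * π) < ‖w‖},
        |w k| * ‖𝓕 (fun x ↦ (polyGaussian S a x : ℂ)) w‖ ≤
      √(Fintype.card ι / 2 + 2 : ℕ) * R ^ (Fintype.card ι / 2 : ℝ) *
        Real.exp (-(1 / 4) * R ^ 2) * ∑ I ∈ S, |a I| * √(∏ j, ((I j).factorial : ℝ)) := by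
  set A : Set (EuclideanSpace ℝ ι) := {w | R / (2 * π) < ‖w‖}
  set C : ℝ := √(Fintype.card ι / 2 + 2 : ℕ) * R ^ (Fintype.card ι / 2 : ℝ) *
    Real.exp (-(1 / 4) * R ^ 2)
  have hint (I : ι → ℕ) : Integrable
      (fun w : EuclideanSpace ℝ ι ↦ |w k| * |hermiteFun I ((2 * π) • w)|) (volume.restrict A) :=
    (integrable_abs_coord_mul_abs_hermiteFun_smul I k (by positivity)).integrableOn
  calc 2 * π * ∫ w in A, |w k| * ‖𝓕 (fun x ↦ (polyGaussian S a x : ℂ)) w‖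
    _ ≤ 2 * π * ∫ w in A, ∑ I ∈ S, √(2 * π) ^ Fintype.card ι * |a I| *
          (|w k| * |hermiteFun I ((2 * π) • w)|) := by
      refine mul_le_mul_of_nonneg_left (integral_mono_of_nonneg
        (.of_forall fun w ↦ by positivity)
        (integrable_finsetSum S fun I _ ↦ (hint I).const_mul _) (.of_forall fun w ↦ ?_))
        Real.two_pi_pos.le
      refine (mul_le_mul_of_nonneg_left (norm_fourier_polyGaussian_le S a w)
        (abs_nonneg _)).trans_eq ?_
      simp only [Finset.mul_sum]
      exact Finset.sum_congr rfl fun I _ ↦ by ring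
    _ = ∑ I ∈ S, |a I| * (√(2 * π) ^ Fintype.card ι *
          (2 * π * ∫ w in A, |w k| * |hermiteFun I ((2 * π) • w)|)) := by
      rw [integral_finsetSum S fun I _ ↦ (hint I).const_mul _, Finset.mul_sum]
      refine Finset.sum_congr rfl fun I _ ↦ ?_
      rw [integral_const_mul]
      ring
    _ ≤ ∑ I ∈ S, |a I| * (C * √(∏ j, ((I j).factorial : ℝ))) :=
      Finset.sum_le_sum fun I _ ↦ mul_le_mul_of_nonneg_left
        (setIntegral_abs_coord_mul_abs_hermiteFun_smul_le hR I k) (abs_nonneg _)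
    _ = C * ∑ I ∈ S, |a I| * √(∏ j, ((I j).factorial : ℝ)) := by
      rw [Finset.mul_sum]
      exact Finset.sum_congr rfl fun I _ ↦ mul_left_comm _ _ _

theorem norm_fderiv_fourierInv_smul_polyGaussian_sub_le [DecidableEq ι] {R : ℝ} (hR : 1 ≤ R)
    (S : Finset (ι → ℕ)) (a : (ι → ℕ) → ℝ) {m : EuclideanSpace ℝ ι → ℂ}
    (hm : AEStronglyMeasurable m) (hm_le : ∀ w, ‖m w - 1‖ ≤ 1)
    (hm_eq : ∀ w, ‖w‖ ≤ R / (2 * π) → m w = 1) (k : ι) (x : EuclideanSpace ℝ ι) :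
    ‖fderiv ℝ (𝓕⁻ fun w ↦ m w • 𝓕 (fun y ↦ (polyGaussian S a y : ℂ)) w) x
        (EuclideanSpace.single k 1) -
      (fderiv ℝ (polyGaussian S a) x (EuclideanSpace.single k 1) : ℝ)‖ ≤
      √(Fintype.card ι / 2 + 2 : ℕ) * R ^ (Fintype.card ι / 2 : ℝ) *
        Real.exp (-(1 / 4) * R ^ 2) * ∑ I ∈ S, |a I| * √(∏ j, ((I j).factorial : ℝ)) := by
  have hcut := norm_fderiv_fourierInv_smul_sub_le (integrable_fourier_polyGaussian S a)
    (integrable_norm_mul_fourier_polyGaussian S a) hm hm_le hm_eq x (EuclideanSpace.single k 1)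
  rw [fourierInv_fourier_polyGaussian, fderiv_ofReal_comp (differentiable_polyGaussian S a x)]
    at hcut
  simp only [EuclideanSpace.inner_single_right, one_mul, conj_trivial] at hcut
  exact hcut.trans (setIntegral_abs_coord_mul_norm_fourier_polyGaussian_le hR S a k)

end Multiplier

theorem stmt10_general (n : ℕ) (S : Finset (Fin n → ℕ)) (a : (Fin n → ℕ) → ℝ)
    (c η : ℝ) (hη : 0 < η) (hcη : 1 ≤ c / (2 * η))
    (χ : EuclideanSpace ℝ (Fin n) → ℝ) (hχ : Measurable χ) (hχ_le : ∀ ξ, |χ ξ - 1| ≤ 1)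
    (hχ1 : ∀ ξ ∈ Metric.closedBall (0 : EuclideanSpace ℝ (Fin n)) (c / 2), χ ξ = 1)
    (k : Fin n) (x : EuclideanSpace ℝ (Fin n)) :
    ‖fderiv ℝ (fun x ↦ (1 / (2 * π) ^ n) * ∫ ξ : EuclideanSpace ℝ (Fin n),
          (χ (η • ξ) : ℂ) * Fn (fun y ↦ (polyGaussian S a y : ℂ)) ξ *
            Complex.exp (Complex.I * (⟪x, ξ⟫ : ℝ))) x (EuclideanSpace.single k 1) -
        (fderiv ℝ (polyGaussian S a) x (EuclideanSpace.single k 1) : ℝ)‖ ≤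
      √(n / 2 + 2 : ℕ) * (c / (2 * η)) ^ (n / 2 : ℝ) * Real.exp (-(1 / 4) * (c / (2 * η)) ^ 2) *
        ∑ I ∈ S, |a I| * √(∏ j, ((I j).factorial : ℝ)) := by
  let m : EuclideanSpace ℝ (Fin n) → ℂ := fun w ↦ χ (η • (2 * π) • w)
  have hm : Measurable m := by fun_prop
  have hm_le (w : EuclideanSpace ℝ (Fin n)) : ‖m w - 1‖ ≤ 1 := by
    rw [← Complex.ofReal_one, ← Complex.ofReal_sub, Complex.norm_real]
    exact hχ_le _
  have hm_eq (w : EuclideanSpace ℝ (Fin n)) (hw : ‖w‖ ≤ c / (2 * η) / (2 * π)) : m w = 1 := by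
    refine Complex.ofReal_eq_one.mpr (hχ1 _ (mem_closedBall_zero_iff.mpr ?_))
    rw [norm_smul, norm_smul, Real.norm_of_nonneg hη.le, Real.norm_of_nonneg Real.two_pi_pos.le]
    calc η * (2 * π * ‖w‖) ≤ η * (2 * π * (c / (2 * η) / (2 * π))) := by gcongr
      _ = c / 2 := by field_simp
  simp only [integral_mul_cexp_I_inner_eq_fourierInv, Fn_eq_fourier,
    inv_smul_smul₀ Real.two_pi_pos.ne', ← smul_eq_mul (a := (χ _ : ℂ))]
  simpa only [Fintype.card_fin] using norm_fderiv_fourierInv_smul_polyGaussian_sub_le hcη S a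
    hm.aestronglyMeasurable hm_le hm_eq k x

/-- `L^∞` bound on `∂_k q^c_η − ∂_k q` where `q = Q e^{-‖x‖²/2}` for a polynomial
`Q = Σ_{I ∈ S} a_I x^I` and `q^c_η = F⁻¹(χ̃_c(ηξ) F(q))`. -/
theorem stmt10 (n : ℕ) (hn : 0 < n)
    (S : Finset (Fin n → ℕ)) (a : (Fin n → ℕ) → ℝ)
    (c η : ℝ) (hc : 0 < c) (hη : 0 < η) (hcη : 1 ≤ c / (2 * η))
    (χ : EuclideanSpace ℝ (Fin n) → ℝ) (hχ : ContDiff ℝ (⊤ : ℕ∞) χ)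
    (hχ01 : ∀ ξ, χ ξ ∈ Set.Icc (0:ℝ) 1)
    (hχsupp : tsupport χ ⊆ Metric.closedBall 0 c)
    (hχ1 : ∀ ξ ∈ Metric.closedBall (0 : EuclideanSpace ℝ (Fin n)) (c / 2), χ ξ = 1)
    (Q q : EuclideanSpace ℝ (Fin n) → ℝ)
    (hQ : Q = fun x => ∑ I ∈ S, a I * ∏ j, x j ^ I j)
    (hq : q = fun x => Q x * Real.exp (-‖x‖ ^ 2 / 2))
    (qcη : EuclideanSpace ℝ (Fin n) → ℂ)
    (hqcη : qcη = fun x => (1 / (2 * Real.pi) ^ n) *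
      ∫ ξ : EuclideanSpace ℝ (Fin n),
        (χ (η • ξ) : ℂ) * Fn (fun y => (q y : ℂ)) ξ * Complex.exp (Complex.I * (⟪x, ξ⟫ : ℝ))) :
    ∀ (k : Fin n) (x : EuclideanSpace ℝ (Fin n)),
      ‖fderiv ℝ qcη x (EuclideanSpace.single k 1)
          - ((fderiv ℝ q x (EuclideanSpace.single k 1) : ℝ) : ℂ)‖ ≤
      Real.sqrt ((n / 2 + 3 : ℕ) : ℝ) * (c / (2 * η)) ^ ((n : ℝ) / 2) *
        Real.exp (-(1 / 4) * (c / (2 * η)) ^ 2) *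
        ∑ I ∈ S, |a I| * Real.sqrt (∏ j, (Nat.factorial (I j) : ℝ)) := by
  subst hQ hq hqcη
  intro k x
  refine (stmt10_general n S a c η hη hcη χ hχ.continuous.measurable (fun ξ ↦
    Real.dist_le_of_mem_Icc_01 (hχ01 ξ) (right_mem_Icc.mpr zero_le_one)) hχ1 k x).trans ?_
  gcongr
  omega

end
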